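/- Let R be a ring with a central invertible element q, and let X be an n×m q-generic matrix over R. Let (i_1,…,i_m) be a tuple of elements of {1,…,n} (not necessarily distinct or ordered) and let A be the m×m matrix whose s-th row is the i_s-th row of X. Suppose that for each s = 1,…,m−1 the (m−s)×(m−s) submatrix of A on rows {s+1,…,m} and columns {s+1,…,m} is invertible, so that each principal quasideterminant below is defined. Then the quantum determinant of A factors as the ordered product of successive quasideterminants: det_q A = |A|_{1,1} · |A^{1,1}|_{2,2} · |A^{{1,2},{1,2}}|_{3,3} ⋯ a_{m,m}, where A^{{1,…,s−1},{1,…,s−1}} denotes A with rows 1,…,s−1 and columns 1,…,s−1 deleted, and the quasideterminant position (s,s) refers to the entry a_{s,s} of A. -/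

import Mathlib

/-!
If row `0` of `A` is replaced by a copy of a later row, `det_q` vanishes. Since `det_q` expands
along the first row as the product of that row with the vector `c` of signed minors of the other
rows, this says that the rows `1, …, m - 1` annihilate `c`; eliminating `c_1, …, c_{m-1}` with the
inverse of `A^{0,0}` gives `det_q A = |A|_{0,0} · det_q A^{0,0}`. The same identity for all trailing
principal submatrices telescopes to the factorization.

A repeated row kills `det_q` for the following reason. Pairing each permutation `σ` with `σ ∘ (0 1)`
writes `det_q` as a combination of `2 × 2` quantum minors of the first two rows. By the relations of
a `q`-Manin matrix, these minors vanish if the two rows are equal, and exchanging two different rows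
multiplies all of them by one and the same factor. So a repetition involving row `0` can be moved
below row `0`, where the expansion along the first row and induction on the size apply.
-/

/-- The number of inversions (the "length" `ℓ`) of a tuple. -/
def tupleInv {m : ℕ} {α : Type*} [LinearOrder α] (f : Fin m → α) : ℕ :=
  ((Finset.univ : Finset (Fin m × Fin m)).filter fun p => p.1 < p.2 ∧ f p.2 < f p.1).card

/-- The quantum determinant `det_q A = ∑_σ (-q)^{-ℓ(σ)} a_{1,σ1} ⋯ a_{n,σn}`. -/
def qdet {R : Type*} [Ring R] {n : ℕ} (q : Rˣ) (A : Matrix (Fin n) (Fin n) R) : R :=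
  ∑ σ : Equiv.Perm (Fin n),
    (((-q) ^ (-(tupleInv fun i => σ i : ℤ)) : Rˣ) : R) * (List.ofFn fun i => A i (σ i)).prod

/-- A matrix is `q`-generic if its entries satisfy the standard quantum relations. -/
def qGeneric {R : Type*} [Ring R] {n m : ℕ} (q : Rˣ) (X : Matrix (Fin n) (Fin m) R) : Prop :=
  (∀ (k : Fin n) (i j : Fin m), i < j → X k j * X k i = (q : R) * (X k i * X k j)) ∧
  (∀ (i j : Fin n) (k : Fin m), i < j → X j k * X i k = (q : R) * (X i k * X j k)) ∧
  (∀ (i j : Fin n) (k l : Fin m), i < j → k < l → X j k * X i l = X i l * X j k) ∧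
  (∀ (i j : Fin n) (k l : Fin m), i < j → k < l →
    X j l * X i k = X i k * X j l + ((q : R) - ((q⁻¹ : Rˣ) : R)) * (X i l * X j k))

/-- The `(i,j)`-quasideterminant of `A`, computed with an explicitly given inverse `C`
of the submatrix `A^{ij}` (`A` with row `i` and column `j` deleted):
`|A|_{ij} = a_{ij} − ξ·(A^{ij})⁻¹·ζ`. -/
def qdCore {R : Type*} [Ring R] {n : ℕ} (A : Matrix (Fin (n+1)) (Fin (n+1)) R)
    (i j : Fin (n+1)) (C : Matrix (Fin n) (Fin n) R) : R :=
  A i j - ∑ l : Fin n, ∑ k : Fin n, A i (j.succAbove l) * C l k * A (i.succAbove k) j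

/-- The principal submatrix of an `m × m` matrix `A` on rows and columns `s, s+1, …, m-1`
(written with size `m - s - 1 + 1`, which equals `m - s`, so that its `(0,0)`
quasideterminant makes sense). -/
def prinSub {R : Type*} [Ring R] {m : ℕ} (A : Matrix (Fin m) (Fin m) R) (s : Fin m) :
    Matrix (Fin (m - s - 1 + 1)) (Fin (m - s - 1 + 1)) R :=
  Matrix.of fun t u => A ⟨s + t, by omega⟩ ⟨s + u, by omega⟩

open Finset Matrix

section Inversions

lemma tupleInv_succ {α : Type*} [LinearOrder α] {n : ℕ} (f : Fin (n + 1) → α) :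
    tupleInv f = #{k : Fin n | f k.succ < f 0} + tupleInv fun k : Fin n => f k.succ := by
  simp only [tupleInv, card_filter, ← univ_product_univ, sum_product, Fin.sum_univ_succ,
    Fin.not_lt_zero, Fin.succ_pos, Fin.succ_lt_succ_iff, true_and, false_and, if_false, zero_add]

lemma swap_zero_one_succ_succ {n : ℕ} (k : Fin n) :
    Equiv.swap (0 : Fin (n + 2)) 1 k.succ.succ = k.succ.succ :=
  Equiv.swap_apply_of_ne_of_ne (Fin.succ_ne_zero _) (Fin.succ_succ_ne_one k)

lemma tupleInv_succ_succ {α : Type*} [LinearOrder α] {n : ℕ} (f : Fin (n + 2) → α) :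
    tupleInv f = (if f 1 < f 0 then #{k : Fin n | f k.succ.succ < f 0} + 1
      else #{k : Fin n | f k.succ.succ < f 0}) +
        (#{k : Fin n | f k.succ.succ < f 1} + tupleInv fun k : Fin n => f k.succ.succ) := by
  rw [tupleInv_succ, tupleInv_succ, Fin.card_filter_univ_succ]
  rfl

lemma tupleInv_comp_swap_zero_one {α : Type*} [LinearOrder α] {n : ℕ} {f : Fin (n + 2) → α}
    (h : f 0 < f 1) : tupleInv (f ∘ Equiv.swap 0 1) = tupleInv f + 1 := by
  simp only [tupleInv_succ_succ, Function.comp_apply, Equiv.swap_apply_left,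
    Equiv.swap_apply_right, swap_zero_one_succ_succ, h, h.not_gt, if_true, if_false]
  omega

/-- The permutation of `Fin (n + 1)` whose one-line notation is `j` followed by `τ`, the values of
`τ` being renumbered so as to avoid `j`. It indexes the terms of the Laplace expansion. -/
def permCons {n : ℕ} (j : Fin (n + 1)) (τ : Equiv.Perm (Fin n)) : Equiv.Perm (Fin (n + 1)) :=
  (finSuccEquiv' 0).trans ((Equiv.optionCongr τ).trans (finSuccEquiv' j).symm)

lemma permCons_zero {n : ℕ} (j : Fin (n + 1)) (τ : Equiv.Perm (Fin n)) : permCons j τ 0 = j := by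
  simp [permCons]

lemma permCons_succ {n : ℕ} (j : Fin (n + 1)) (τ : Equiv.Perm (Fin n)) (k : Fin n) :
    permCons j τ k.succ = j.succAbove (τ k) := by
  have succ_eq : finSuccEquiv' (0 : Fin (n + 1)) k.succ = some k := by
    rw [← Fin.succAbove_zero_apply, finSuccEquiv'_succAbove]
  simp [permCons, succ_eq]

lemma permCons_bijective (n : ℕ) :
    Function.Bijective fun x : Fin (n + 1) × Equiv.Perm (Fin n) => permCons x.1 x.2 := by
  rw [Fintype.bijective_iff_injective_and_card]
  refine ⟨fun ⟨j, τ⟩ ⟨j', τ'⟩ h => ?_, by simp [Fintype.card_perm, Nat.factorial_succ]⟩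
  obtain rfl : j = j' := by simpa only [permCons_zero] using DFunLike.congr_fun h 0
  have : τ = τ' := Equiv.ext fun k => by
    simpa only [permCons_succ, Fin.succAbove_right_inj] using DFunLike.congr_fun h k.succ
  rw [this]

lemma tupleInv_permCons {n : ℕ} (j : Fin (n + 1)) (τ : Equiv.Perm (Fin n)) :
    tupleInv (permCons j τ) = j + tupleInv τ := by
  have smaller : #{k | j.succAbove (τ k) < j} = (j : ℕ) := by
    simp only [card_filter, Fin.succAbove_lt_iff_castSucc_lt]
    rw [Equiv.sum_comp τ fun k => if k.castSucc < j then 1 else 0, ← card_filter]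
    simp only [Fin.lt_def, Fin.val_castSucc, Fin.card_filter_val_lt]
    omega
  simp only [tupleInv_succ, permCons_zero, permCons_succ, smaller]
  simp only [tupleInv, Fin.succAbove_lt_succAbove_iff]

end Inversions

section QuantumDeterminant

variable {R : Type*} [Ring R] {q : Rˣ} {n : ℕ}

lemma qdet_eq_sum_smul (q : Rˣ) (A : Matrix (Fin n) (Fin n) R) :
    qdet q A = ∑ σ : Equiv.Perm (Fin n),
      (-q)⁻¹ ^ tupleInv σ • (List.ofFn fun k => A k (σ k)).prod := by
  simp only [qdet, _root_.zpow_neg, zpow_natCast, inv_pow, Units.smul_def, smul_eq_mul]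

lemma qdet_of_size_zero (q : Rˣ) (hn : n = 0) (A : Matrix (Fin n) (Fin n) R) : qdet q A = 1 := by
  subst hn
  simp [qdet_eq_sum_smul, tupleInv]

lemma qdet_submatrix_cast (q : Rˣ) {n' : ℕ} (h : n' = n) (A : Matrix (Fin n) (Fin n) R) :
    qdet q (A.submatrix (Fin.cast h) (Fin.cast h)) = qdet q A := by
  subst h
  rfl

lemma mul_neg_inv_pow_smul (hq : ∀ x : R, (q : R) * x = x * (q : R)) (k : ℕ) (x y : R) :
    x * ((-q)⁻¹ ^ k • y) = (-q)⁻¹ ^ k • (x * y) := by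
  have comm_neg_q : Commute ((-q : Rˣ) : R) x := by
    rw [Units.val_neg]
    exact Commute.neg_left (hq x)
  have comm : Commute (((-q)⁻¹ ^ k : Rˣ) : R) x := by
    rw [Units.val_pow_eq_pow_val]
    exact comm_neg_q.units_inv_left.pow_left k
  rw [Units.smul_def, Units.smul_def, smul_eq_mul, smul_eq_mul, comm.left_comm]

/-- The vector of signed maximal quantum minors of an `n × (n + 1)` matrix: the coefficients of the
expansion of a quantum determinant along a row put on top of `B`. -/
def qcofactor (q : Rˣ) (B : Matrix (Fin n) (Fin (n + 1)) R) (j : Fin (n + 1)) : R :=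
  (-q)⁻¹ ^ (j : ℕ) • qdet q (B.submatrix id j.succAbove)

lemma qdet_eq_dotProduct_qcofactor (hq : ∀ x : R, (q : R) * x = x * (q : R))
    (A : Matrix (Fin (n + 1)) (Fin (n + 1)) R) :
    qdet q A = A 0 ⬝ᵥ qcofactor q (A.submatrix Fin.succ id) := by
  rw [qdet_eq_sum_smul, ← (permCons_bijective n).sum_comp, Fintype.sum_prod_type]
  refine sum_congr rfl fun j _ => ?_
  rw [qcofactor, qdet_eq_sum_smul, mul_neg_inv_pow_smul hq, mul_sum, smul_sum]
  refine sum_congr rfl fun τ _ => ?_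
  rw [mul_neg_inv_pow_smul hq, smul_smul, ← pow_add, tupleInv_permCons, List.ofFn_succ,
    List.prod_cons, permCons_zero]
  simp only [permCons_succ, submatrix_apply, id]

/-- The `2 × 2` quantum minor of two rows `x`, `y` on the columns `c`, `d`. -/
def qminor {κ : Type*} (q : Rˣ) (x y : κ → R) (c d : κ) : R :=
  x c * y d - q⁻¹ • (x d * y c)

lemma qdet_eq_sum_qminor (q : Rˣ) (A : Matrix (Fin (n + 2)) (Fin (n + 2)) R) :
    qdet q A = ∑ σ : Equiv.Perm (Fin (n + 2)) with σ 0 < σ 1, (-q)⁻¹ ^ tupleInv σ •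
      (qminor q (A 0) (A 1) (σ 0) (σ 1) *
        (List.ofFn fun k : Fin n => A k.succ.succ (σ k.succ.succ)).prod) := by
  have prod_eq (σ : Equiv.Perm (Fin (n + 2))) : (List.ofFn fun k => A k (σ k)).prod =
      A 0 (σ 0) * A 1 (σ 1) *
        (List.ofFn fun k : Fin n => A k.succ.succ (σ k.succ.succ)).prod := by
    simp only [List.ofFn_succ, List.prod_cons, Fin.succ_zero_eq_one, mul_assoc]
  have sum_descents : ∑ σ : Equiv.Perm (Fin (n + 2)) with ¬ σ 0 < σ 1,
      (-q)⁻¹ ^ tupleInv σ • (List.ofFn fun k => A k (σ k)).prod =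
      ∑ σ : Equiv.Perm (Fin (n + 2)) with σ 0 < σ 1, (-q)⁻¹ ^ (tupleInv σ + 1) •
        (A 0 (σ 1) * A 1 (σ 0) *
          (List.ofFn fun k : Fin n => A k.succ.succ (σ k.succ.succ)).prod) := by
    refine (sum_equiv (Equiv.mulRight (Equiv.swap 0 1)) (fun σ => ?_) fun σ hσ => ?_).symm
    · simp [lt_iff_le_and_ne]
    · rw [prod_eq, Equiv.coe_mulRight, Equiv.Perm.coe_mul,
        tupleInv_comp_swap_zero_one (mem_filter.mp hσ).2]
      simp only [Function.comp_apply, Equiv.swap_apply_left, Equiv.swap_apply_right,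
        swap_zero_one_succ_succ]
  rw [qdet_eq_sum_smul, ← sum_filter_add_sum_filter_not univ fun σ => σ 0 < σ 1, sum_descents,
    ← sum_add_distrib]
  refine sum_congr rfl fun σ _ => ?_
  rw [prod_eq, pow_succ, mul_smul, ← smul_add, ← smul_mul_assoc, ← add_mul, qminor, inv_neg,
    Units.neg_smul, sub_eq_add_neg]

lemma qdet_eq_mul_qdet_of_qminor_eq_mul (hq : ∀ x : R, (q : R) * x = x * (q : R))
    {A B : Matrix (Fin (n + 2)) (Fin (n + 2)) R} {w : R}
    (hminor : ∀ c d, c < d → qminor q (A 0) (A 1) c d = w * qminor q (B 0) (B 1) c d)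
    (hrow : ∀ k : Fin n, A k.succ.succ = B k.succ.succ) : qdet q A = w * qdet q B := by
  rw [qdet_eq_sum_qminor, qdet_eq_sum_qminor, mul_sum]
  refine sum_congr rfl fun σ hσ => ?_
  simp only [hminor _ _ (mem_filter.mp hσ).2, hrow, mul_neg_inv_pow_smul hq, mul_assoc]

lemma qdet_eq_zero_of_qminor_eq_zero {A : Matrix (Fin (n + 2)) (Fin (n + 2)) R}
    (hminor : ∀ c d, c < d → qminor q (A 0) (A 1) c d = 0) : qdet q A = 0 := by
  rw [qdet_eq_sum_qminor]
  refine sum_eq_zero fun σ hσ => ?_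
  rw [hminor _ _ (mem_filter.mp hσ).2, zero_mul, smul_zero]

end QuantumDeterminant

section Quasideterminant

variable {R : Type*} [Ring R] {n : ℕ}

lemma dotProduct_eq_qdCore_mul (A : Matrix (Fin (n + 1)) (Fin (n + 1)) R) (i j : Fin (n + 1))
    {c : Fin (n + 1) → R} (hc : ∀ k, A (i.succAbove k) ⬝ᵥ c = 0) {C : Matrix (Fin n) (Fin n) R}
    (hC : C * A.submatrix i.succAbove j.succAbove = 1) : A i ⬝ᵥ c = qdCore A i j C * c j := by
  have expand (k : Fin (n + 1)) :
      A k ⬝ᵥ c = A k j * c j + ∑ l, A k (j.succAbove l) * c (j.succAbove l) :=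
    Fin.sum_univ_succAbove _ j
  have submatrix_mulVec : A.submatrix i.succAbove j.succAbove *ᵥ (c ∘ j.succAbove) =
      fun k => -(A (i.succAbove k) j * c j) := by
    funext k
    exact eq_neg_of_add_eq_zero_right ((expand _).symm.trans (hc k))
  have entry (l : Fin n) : c (j.succAbove l) = -∑ k, C l k * (A (i.succAbove k) j * c j) := by
    calc
      c (j.succAbove l) =
          (C *ᵥ (A.submatrix i.succAbove j.succAbove *ᵥ (c ∘ j.succAbove))) l := by
        rw [mulVec_mulVec, hC, one_mulVec, Function.comp_apply]
      _ = -∑ k, C l k * (A (i.succAbove k) j * c j) := by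
        rw [submatrix_mulVec]
        simp only [mulVec, dotProduct, mul_neg, sum_neg_distrib]
  simp only [expand, entry, qdCore, sub_mul, sum_mul, mul_neg, mul_sum, sum_neg_distrib, mul_assoc,
    ← sub_eq_add_neg]

end Quasideterminant

section RowManin

variable {R ι κ : Type*} [Ring R] {q : Rˣ}

/-- The transpose of `X` is a `q`-Manin matrix: entries of `X` in one row `q`-commute, and any two
rows satisfy the cross relation saying that their quantum minors are `q`-antisymmetric in the two
rows. Hence exchanging two rows multiplies a quantum determinant by a scalar. -/
structure IsRowManin [LT ι] [LT κ] (q : Rˣ) (X : Matrix ι κ R) : Prop where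
  row : ∀ u c d, c < d → X u d * X u c = q • (X u c * X u d)
  cross : ∀ u v c d, u < v → c < d →
    X u c * X v d - X v d * X u c = q⁻¹ • (X u d * X v c) - q • (X v c * X u d)

lemma qGeneric.isRowManin {n m : ℕ} {X : Matrix (Fin n) (Fin m) R} (hX : qGeneric q X) :
    IsRowManin q X where
  row u c d hcd := hX.1 u c d hcd
  cross u v c d huv hcd := by
    rw [hX.2.2.1 u v c d huv hcd, hX.2.2.2 u v c d huv hcd]
    simp only [Units.smul_def, smul_eq_mul, sub_mul]
    abel

namespace IsRowManin

lemma qminor_self [LT ι] [LT κ] {X : Matrix ι κ R} (hX : IsRowManin q X) (u : ι) {c d : κ}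
    (hcd : c < d) : qminor q (X u) (X u) c d = 0 := by
  rw [qminor, hX.row u c d hcd, inv_smul_smul, sub_self]

lemma qminor_swap [LT ι] [LT κ] {X : Matrix ι κ R} (hX : IsRowManin q X) {u v : ι} {c d : κ}
    (huv : u < v) (hcd : c < d) :
    qminor q (X v) (X u) c d = (-q)⁻¹ • qminor q (X u) (X v) c d := by
  have cross : X v d * X u c =
      X u c * X v d - q⁻¹ • (X u d * X v c) + q • (X v c * X u d) := by
    rw [sub_add, ← hX.cross u v c d huv hcd, sub_sub_cancel]
  rw [qminor, qminor, cross, smul_add, inv_smul_smul, inv_neg, Units.neg_smul]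
  abel

lemma exists_qminor_eq_mul_swap [LinearOrder ι] [LT κ] {X : Matrix ι κ R} (hX : IsRowManin q X)
    {u v : ι} (huv : u ≠ v) :
    ∃ w : R, ∀ c d, c < d → qminor q (X u) (X v) c d = w * qminor q (X v) (X u) c d := by
  rcases huv.lt_or_gt with h | h
  · refine ⟨((-q : Rˣ) : R), fun c d hcd => ?_⟩
    rw [← smul_eq_mul, ← Units.smul_def, hX.qminor_swap h hcd, smul_inv_smul]
  · exact ⟨(((-q)⁻¹ : Rˣ) : R), fun c d hcd => hX.qminor_swap h hcd⟩

variable [LinearOrder ι] [Preorder κ] {X : Matrix ι κ R}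

lemma qdet_submatrix_eq_zero (hX : IsRowManin q X) (hq : ∀ x : R, (q : R) * x = x * (q : R))
    {m : ℕ} {i : Fin m → ι} (hi : ¬ Function.Injective i) {f : Fin m → κ} (hf : StrictMono f) :
    qdet q (X.submatrix i f) = 0 := by
  induction m with
  | zero => exact (hi (Function.injective_of_subsingleton i)).elim
  | succ m ih =>
    have of_tail {u : ι} {t : Fin m → ι} (ht : ¬ Function.Injective t) :
        qdet q (X.submatrix (Fin.cons u t) f) = 0 := by
      rw [qdet_eq_dotProduct_qcofactor hq]
      refine sum_eq_zero fun j _ => ?_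
      have minor_eq_zero : qdet q (((X.submatrix (Fin.cons u t) f).submatrix Fin.succ id).submatrix
          id j.succAbove) = 0 := ih ht (hf.comp (Fin.strictMono_succAbove j))
      rw [qcofactor, minor_eq_zero, smul_zero, mul_zero]
    cases i using Fin.consCases with | _ u t =>
    by_cases ht : Function.Injective t
    case neg => exact of_tail ht
    have u_mem_range : u ∈ Set.range t := by
      by_contra hu
      exact hi (Fin.cons_injective_iff.mpr ⟨hu, ht⟩)
    obtain _ | m := m
    · exact (Set.range_eq_empty t ▸ u_mem_range).elim
    cases t using Fin.consCases with | _ v t =>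
    rcases eq_or_ne u v with rfl | huv
    · exact qdet_eq_zero_of_qminor_eq_zero fun c d hcd => hX.qminor_self u (hf hcd)
    · obtain ⟨w, hw⟩ := hX.exists_qminor_eq_mul_swap huv
      have swapped_eq_zero : qdet q (X.submatrix (Fin.cons v (Fin.cons u t)) f) = 0 := by
        refine of_tail fun h => (Fin.cons_injective_iff.mp h).1 ?_
        obtain ⟨k, hk⟩ := u_mem_range
        cases k using Fin.cases with
        | zero => exact (huv hk.symm).elim
        | succ k => exact ⟨k, hk⟩
      have eq_mul_swapped : qdet q (X.submatrix (Fin.cons u (Fin.cons v t)) f) =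
          w * qdet q (X.submatrix (Fin.cons v (Fin.cons u t)) f) :=
        qdet_eq_mul_qdet_of_qminor_eq_mul hq (fun c d hcd => hw _ _ (hf hcd)) fun _ => rfl
      rw [eq_mul_swapped, swapped_eq_zero, mul_zero]

lemma qdet_submatrix_eq_qdCore_mul (hX : IsRowManin q X)
    (hq : ∀ x : R, (q : R) * x = x * (q : R)) {m : ℕ} (i : Fin (m + 1) → ι) {f : Fin (m + 1) → κ}
    (hf : StrictMono f) {C : Matrix (Fin m) (Fin m) R}
    (hC : C * (X.submatrix i f).submatrix Fin.succ Fin.succ = 1) :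
    qdet q (X.submatrix i f) =
      qdCore (X.submatrix i f) 0 0 C *
        qdet q ((X.submatrix i f).submatrix Fin.succ Fin.succ) := by
  set c := qcofactor q ((X.submatrix i f).submatrix Fin.succ id) with c_def
  have c_zero : c 0 = qdet q ((X.submatrix i f).submatrix Fin.succ Fin.succ) := by
    simp [c_def, qcofactor]
  have row_dotProduct_c (k : Fin m) : X.submatrix i f k.succ ⬝ᵥ c = 0 := by
    have repeated : ¬ Function.Injective (Fin.cons (i k.succ) (Fin.tail i) : Fin (m + 1) → ι) :=
      fun h => (Fin.cons_injective_iff.mp h).1 ⟨k, rfl⟩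
    exact (qdet_eq_dotProduct_qcofactor hq _).symm.trans (hX.qdet_submatrix_eq_zero hq repeated hf)
  rw [qdet_eq_dotProduct_qcofactor hq, ← c_zero]
  exact dotProduct_eq_qdCore_mul _ 0 0 row_dotProduct_c hC

end IsRowManin

end RowManin

section Factorization

variable {R : Type*} {m : ℕ}

/-- The submatrix of `A` on rows and columns `s, …, m - 1`. Unlike `prinSub A s`, it is also defined
for `s = m`, where it is the empty matrix, and its size is literally `m - s`. -/
def trailingSub (A : Matrix (Fin m) (Fin m) R) (s : ℕ) : Matrix (Fin (m - s)) (Fin (m - s)) R :=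
  of fun t u => A ⟨s + t, by omega⟩ ⟨s + u, by omega⟩

lemma trailingSub_zero (A : Matrix (Fin m) (Fin m) R) : trailingSub A 0 = A := by
  ext t u
  simp [trailingSub]

variable [Ring R]

lemma qdet_prinSub (q : Rˣ) (A : Matrix (Fin m) (Fin m) R) (s : Fin m) :
    qdet q (prinSub A s) = qdet q (trailingSub A s) :=
  qdet_submatrix_cast q (by omega) (trailingSub A s)

lemma prinSub_submatrix_succ (A : Matrix (Fin m) (Fin m) R) (s : Fin m) :
    (prinSub A s).submatrix Fin.succ Fin.succ = trailingSub A (s + 1) := by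
  ext t u
  simp only [prinSub, trailingSub, submatrix_apply, of_apply, Fin.val_succ]
  congr 2 <;> omega

lemma prod_ofFn_eq_of_eq_mul_succ {M : Type*} [Monoid M] {x : Fin m → M} {D : ℕ → M}
    (hD : ∀ s : Fin m, D s = x s * D (s + 1)) (hm : D m = 1) : (List.ofFn x).prod = D 0 := by
  induction m generalizing D with
  | zero => simpa using hm.symm
  | succ m ih =>
    rw [List.ofFn_succ, List.prod_cons, ih (D := fun s => D (s + 1)) (fun s => hD s.succ) hm]
    exact (hD 0).symm

theorem stmt18_general {ι κ : Type*} [LinearOrder ι] [Preorder κ] (q : Rˣ)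
    (hq : ∀ x : R, (q : R) * x = x * (q : R)) {X : Matrix ι κ R} (hX : IsRowManin q X)
    (i : Fin m → ι) {f : Fin m → κ} (hf : StrictMono f)
    (C : (s : Fin m) → Matrix (Fin (m - s - 1)) (Fin (m - s - 1)) R)
    (hC : ∀ s, C s * (prinSub (X.submatrix i f) s).submatrix Fin.succ Fin.succ = 1) :
    qdet q (X.submatrix i f) =
      (List.ofFn fun s => qdCore (prinSub (X.submatrix i f) s) 0 0 (C s)).prod := by
  set A := X.submatrix i f
  have qdet_eq_mul (s : Fin m) : qdet q (trailingSub A s) =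
      qdCore (prinSub A s) 0 0 (C s) * qdet q (trailingSub A (s + 1)) := by
    rw [← qdet_prinSub, ← prinSub_submatrix_succ]
    exact hX.qdet_submatrix_eq_qdCore_mul hq (fun t => i ⟨s + t, by omega⟩)
      (f := fun t => f ⟨s + t, by omega⟩) (fun t u htu => hf (by simpa using htu)) (hC s)
  rw [prod_ofFn_eq_of_eq_mul_succ (D := fun s => qdet q (trailingSub A s)) qdet_eq_mul
    (qdet_of_size_zero q (Nat.sub_self m) _), trailingSub_zero]

end Factorization

/-- If `A` is built from rows `i 0, …, i (m-1)` of an `n × m`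
`q`-generic matrix `X`, and for each `s` the principal submatrix of `A` on rows and
columns `{s+1, …, m-1}` has a two-sided inverse `C s` (so that the principal
quasideterminants are defined), then `det_q A` is the ordered product
`|A|_{0,0} · |A^{0,0}|_{1,1} ⋯ a_{m-1,m-1}` of the successive principal
quasideterminants. -/
theorem stmt18 {R : Type*} [Ring R] (q : Rˣ) (hq : ∀ x : R, (q : R) * x = x * (q : R))
    {n m : ℕ} (X : Matrix (Fin n) (Fin m) R) (hX : qGeneric q X) (i : Fin m → Fin n)
    (C : (s : Fin m) → Matrix (Fin (m - s - 1)) (Fin (m - s - 1)) R)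
    (hC : ∀ s : Fin m,
      (prinSub (Matrix.of fun s' t => X (i s') t) s).submatrix
          (0 : Fin (m - s - 1 + 1)).succAbove (0 : Fin (m - s - 1 + 1)).succAbove * C s = 1 ∧
      C s * (prinSub (Matrix.of fun s' t => X (i s') t) s).submatrix
          (0 : Fin (m - s - 1 + 1)).succAbove (0 : Fin (m - s - 1 + 1)).succAbove = 1) :
    qdet q (Matrix.of fun s t => X (i s) t) =
      (List.ofFn fun s : Fin m =>
        qdCore (prinSub (Matrix.of fun s' t => X (i s') t) s) 0 0 (C s)).prod :=
  stmt18_general q hq hX.isRowManin i strictMono_id C fun s => (hC s).2
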